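/- arXiv:1412.3902 — 2 statements merged into one kernel-verified Lean document; each statement's English description precedes it below -/
import Mathlib

section
/- Let $x$ be a real number and $t > 0$. For each $n \in \mathbb{N}$, toss a fair coin $n$ times; let $n_H$ and $n_T$ be the number of heads and tails, and set $S_n^{x,t} = x + ((n_H - n_T)/\sqrt{n})\sqrt{t}$. Then for any extended real numbers $a \le b$, $\lim_{n\to\infty} \mathrm{Prob}(a \le S_n^{x,t} \le b) = \int_a^b \mathcal{G}(t,x,y)\,dy$, where $\mathcal{G}(t,x,y) = \frac{1}{\sqrt{2\pi t}} \exp\left(-\frac{(y-x)^2}{2t}\right)$. Equivalently in counting form: $\lim_{n\to\infty} 2^{-n} \#\{\omega \in \{-1,1\}^n : a \le x + (\sum_{i=1}^n \omega_i)\sqrt{t}/\sqrt{n} \le b\} = \int_a^b \mathcal{G}(t,x,y)\,dy$. -/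
open MeasureTheory Filter
open scoped Classical

/-- The Gaussian (heat) kernel on the line. -/
noncomputable def G (t x y : ℝ) : ℝ :=
  (1 / Real.sqrt (2 * Real.pi * t)) * Real.exp (-(y - x) ^ 2 / (2 * t))

/-- The partial sum `S_k(ω) = x + (∑_{i=1}^k ω_i) √t / √n` of a walk given by
`ω ∈ {-1,1}^n` (encoded as `Fin n → Bool`, `true` = head = +1, `false` = tail = -1). -/
noncomputable def S (x t : ℝ) (n : ℕ) (ω : Fin n → Bool) (k : ℕ) : ℝ :=
  x + (∑ i : Fin n, if (i : ℕ) < k then (if ω i then (1 : ℝ) else -1) else 0)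
      * Real.sqrt t / Real.sqrt n

/-!
Realise all the walks on a single space of infinitely many independent fair coins. There the
central limit theorem gives convergence in distribution of `S x t n ω n` to a Gaussian of mean `x`
and variance `t`, so by the portmanteau theorem the probabilities of a set converge as soon as its
frontier is Lebesgue-null. The first `n` coins are uniform on `{-1,1}^n`, which turns these
probabilities into proportions of sign sequences.
-/

open ProbabilityTheory
open scoped NNReal Topology

section Portmanteau

variable {ι E Ω' : Type*} {Ω : ι → Type*} {mΩ : ∀ i, MeasurableSpace (Ω i)}
  {μ : (i : ι) → Measure (Ω i)} [∀ i, IsProbabilityMeasure (μ i)]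
  {mΩ' : MeasurableSpace Ω'} {μ' : Measure Ω'} [IsProbabilityMeasure μ']
  [TopologicalSpace E] [MeasurableSpace E] [OpensMeasurableSpace E] [HasOuterApproxClosed E]
  {X : (i : ι) → Ω i → E} {Z : Ω' → E} {ν : Measure E} {l : Filter ι} {s : Set E}

lemma tendsto_measure_preimage_of_measurableSet (h : TendstoInDistribution X l Z μ μ')
    (hZ : HasLaw Z ν μ') (hs : MeasurableSet s) (hfr : ν (frontier s) = 0) :
    Tendsto (fun i ↦ μ i (X i ⁻¹' s)) l (𝓝 (ν s)) := by
  rw [← hZ.map_eq] at hfr ⊢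
  refine (ProbabilityMeasure.tendsto_measure_of_null_frontier_of_tendsto' h.tendsto hfr).congr
    fun i ↦ ?_
  exact Measure.map_apply_of_aemeasurable (h.forall_aemeasurable i) hs

lemma tendsto_measure_preimage_of_null_frontier (h : TendstoInDistribution X l Z μ μ')
    (hZ : HasLaw Z ν μ') (hfr : ν (frontier s) = 0) :
    Tendsto (fun i ↦ μ i (X i ⁻¹' s)) l (𝓝 (ν s)) := by
  have h_interior : Tendsto (fun i ↦ μ i (X i ⁻¹' interior s)) l (𝓝 (ν s)) := by
    rw [← measure_interior_of_null_frontier hfr]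
    exact tendsto_measure_preimage_of_measurableSet h hZ isOpen_interior.measurableSet
      (measure_mono_null frontier_interior_subset hfr)
  have h_closure : Tendsto (fun i ↦ μ i (X i ⁻¹' closure s)) l (𝓝 (ν s)) := by
    rw [← measure_closure_of_null_frontier hfr]
    exact tendsto_measure_preimage_of_measurableSet h hZ isClosed_closure.measurableSet
      (measure_mono_null frontier_closure_subset hfr)
  exact tendsto_of_tendsto_of_tendsto_of_le_of_le h_interior h_closure
    (fun _ ↦ measure_mono (Set.preimage_mono interior_subset))
    (fun _ ↦ measure_mono (Set.preimage_mono subset_closure))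

end Portmanteau

section Gaussian

variable {Ω : Type*} {mΩ : MeasurableSpace Ω} {P : Measure Ω} {Y : Ω → ℝ}

lemma hasLaw_gaussianReal_const_add_mul_sqrt (hY : HasLaw Y (gaussianReal 0 1) P) (x : ℝ)
    (t : ℝ≥0) : HasLaw (fun ω ↦ x + Y ω * √t) (gaussianReal x t) P := by
  have h_var : (NNReal.mk (√(t : ℝ) ^ 2) (sq_nonneg _)) * 1 = t := by
    ext; simp
  simpa only [mul_zero, zero_add, h_var] using
    gaussianReal_const_add (gaussianReal_mul_const hY √t) x

lemma measureReal_gaussianReal_eq_setIntegral (μ : ℝ) {v : ℝ≥0} (hv : v ≠ 0) (s : Set ℝ) :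
    (gaussianReal μ v).real s = ∫ y in s, gaussianPDFReal μ v y := by
  rw [measureReal_def, gaussianReal_apply_eq_integral μ hv s,
    ENNReal.toReal_ofReal (integral_nonneg (gaussianPDFReal_nonneg μ v))]

lemma G_eq_gaussianPDFReal (x : ℝ) (t : ℝ≥0) : G t x = gaussianPDFReal x t := by
  ext y
  rw [G, gaussianPDFReal, one_div]

end Gaussian

section Uniform

variable {α : Type*} [MeasurableSpace α] [MeasurableSingletonClass α]

lemma measureReal_uniformOn_univ [Fintype α] (p : α → Prop) [DecidablePred p] :
    (uniformOn (Set.univ : Set α)).real {a | p a}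
      = ((Finset.univ.filter p).card : ℝ) / Fintype.card α := by
  rw [measureReal_def, uniformOn_univ, Measure.count_apply_finite _ (Set.toFinite _)]
  simp

lemma integral_uniformOn_univ {F : Type*} [NormedAddCommGroup F] [NormedSpace ℝ F] [CompleteSpace F]
    [Fintype α] (f : α → F) :
    ∫ a, f a ∂uniformOn (Set.univ : Set α) = (Fintype.card α : ℝ)⁻¹ • ∑ a, f a := by
  have h_singleton (a : α) : (uniformOn (Set.univ : Set α)).real {a} = (Fintype.card α : ℝ)⁻¹ := by
    simp [measureReal_def, uniformOn_univ]
  rw [integral_fintype .of_finite, Finset.smul_sum]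
  simp only [h_singleton]

lemma hasLaw_precomp_infinitePi_uniformOn_univ [Finite α] [Nonempty α] {ι κ : Type*} [Finite κ]
    {g : κ → ι} (hg : Function.Injective g) :
    HasLaw (fun (ω : ι → α) k ↦ ω (g k)) (uniformOn Set.univ)
      (Measure.infinitePi fun _ ↦ uniformOn Set.univ) := by
  have := Fintype.ofFinite κ
  rw [← Set.pi_univ Set.univ, uniformOn_pi]
  exact ((iIndepFun_infinitePi fun _ ↦ measurable_id).precomp hg).hasLaw_pi
    fun k ↦ (measurePreserving_eval_infinitePi (fun _ ↦ uniformOn Set.univ) (g k)).hasLaw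

end Uniform

lemma tendstoInDistribution_inv_sqrt_mul_sum_infinitePi {α : Type*} {mα : MeasurableSpace α}
    {μ : Measure α} [IsProbabilityMeasure μ] {f : α → ℝ} (hf : Measurable f)
    (h_mean : ∫ a, f a ∂μ = 0) (h_var : ∫ a, f a ^ 2 ∂μ = 1) :
    TendstoInDistribution (fun (n : ℕ) (ω : ℕ → α) ↦ (√n)⁻¹ * ∑ k ∈ Finset.range n, f (ω k))
      atTop id (fun _ ↦ Measure.infinitePi fun _ ↦ μ) (gaussianReal 0 1) := by
  have h_eval (k : ℕ) : HasLaw (fun ω : ℕ → α ↦ ω k) μ (Measure.infinitePi fun _ ↦ μ) :=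
    (measurePreserving_eval_infinitePi (fun _ ↦ μ) k).hasLaw
  refine tendstoInDistribution_inv_sqrt_mul_sum (X := fun k (ω : ℕ → α) ↦ f (ω k)) .id ?_ ?_
    (iIndepFun_infinitePi fun _ ↦ hf) fun k ↦ ((h_eval k).identDistrib (h_eval 0)).comp hf
  · rw [← h_mean]
    exact (h_eval 0).integral_comp hf.aestronglyMeasurable
  · rw [← h_var]
    exact (h_eval 0).integral_comp (hf.pow_const 2).aestronglyMeasurable

/-- The law of an infinite sequence of independent fair coin tosses; it carries the walks of all
lengths `n` at once. -/
noncomputable abbrev coinTosses : Measure (ℕ → Bool) :=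
  Measure.infinitePi fun _ ↦ uniformOn Set.univ

/-- The increment `±1` of the walk after one toss, with `true` for heads as in `S`. -/
def coinSign (b : Bool) : ℝ := if b then 1 else -1

lemma S_self_eq (x t : ℝ) (n : ℕ) (ω : ℕ → Bool) :
    S x t n (fun i ↦ ω i) n = x + (√n)⁻¹ * (∑ k ∈ Finset.range n, coinSign (ω k)) * √t := by
  simp only [S, Fin.is_lt, if_true, Finset.sum_range, coinSign]
  ring

lemma tendstoInDistribution_S (x t : ℝ) :
    TendstoInDistribution (fun n (ω : ℕ → Bool) ↦ S x t n (fun i ↦ ω i) n) atTop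
      (fun z ↦ x + z * √t) (fun _ ↦ coinTosses) (gaussianReal 0 1) := by
  have h_clt := tendstoInDistribution_inv_sqrt_mul_sum_infinitePi
    (μ := uniformOn Set.univ) (f := coinSign) (by fun_prop)
    (by rw [integral_uniformOn_univ]; simp [coinSign])
    (by rw [integral_uniformOn_univ]; simp [coinSign])
  simp_rw [S_self_eq]
  exact h_clt.continuous_comp (g := fun z ↦ x + z * √t) (by fun_prop)

lemma measureReal_coinTosses (n : ℕ) (p : (Fin n → Bool) → Prop) [DecidablePred p] :
    coinTosses.real {ω | p (fun i ↦ ω i)} = ((Finset.univ.filter p).card : ℝ) / 2 ^ n := by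
  rw [(hasLaw_precomp_infinitePi_uniformOn_univ Fin.val_injective).measureReal_eq (p := p)
    (Set.toFinite _).measurableSet, measureReal_uniformOn_univ]
  simp

theorem stmt0_general (x t : ℝ) (ht : 0 < t) {E : Set ℝ} (hE : volume (frontier E) = 0) :
    Tendsto
      (fun n : ℕ ↦ ((Finset.univ.filter fun ω : Fin n → Bool ↦ S x t n ω n ∈ E).card : ℝ) / 2 ^ n)
      atTop (𝓝 (∫ y in E, G t x y)) := by
  lift t to ℝ≥0 using ht.le
  have ht' : t ≠ 0 := (NNReal.coe_pos.mp ht).ne'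
  have h_prob : Tendsto (fun n ↦ coinTosses {ω | S x t n (fun i ↦ ω i) n ∈ E}) atTop
      (𝓝 (gaussianReal x t E)) :=
    tendsto_measure_preimage_of_null_frontier (tendstoInDistribution_S x t)
      (hasLaw_gaussianReal_const_add_mul_sqrt .id x t)
      (gaussianReal_absolutelyContinuous x ht' hE)
  rw [G_eq_gaussianPDFReal, ← measureReal_gaussianReal_eq_setIntegral x ht']
  simp_rw [← measureReal_coinTosses, measureReal_def]
  exact (ENNReal.tendsto_toReal (measure_ne_top _ E)).comp h_prob

lemma ordConnected_setOf_coe_mem_Icc (a b : EReal) :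
    {y : ℝ | a ≤ (y : EReal) ∧ (y : EReal) ≤ b}.OrdConnected :=
  Set.ordConnected_Icc.preimage_mono EReal.coe_strictMono.monotone

theorem stmt0 (x t : ℝ) (ht : 0 < t) (a b : EReal) (hab : a ≤ b) :
    Tendsto
      (fun n : ℕ =>
        ((Finset.univ.filter (fun ω : Fin n → Bool =>
            a ≤ ((S x t n ω n : ℝ) : EReal) ∧ ((S x t n ω n : ℝ) : EReal) ≤ b)).card : ℝ)
          / 2 ^ n)
      atTop
      (nhds (∫ y in {y : ℝ | a ≤ (y : EReal) ∧ (y : EReal) ≤ b}, G t x y)) := by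
  -- The two filters carry different decidability instances, which `convert!` reconciles.
  convert! stmt0_general x t ht
    ((ordConnected_setOf_coe_mem_Icc a b).convex.addHaar_frontier volume)
end

section
/- Fix $x \in \mathbb{R}$, $t > 0$, $L > 0$, $n \in \mathbb{N}$, and $\mathcal{U} \subseteq \mathbb{R}$. Then for every $m \in \{1, 2, \dots, n-1\}$, $\mathcal{F}^0_{n,m}(\mathcal{U}) \cap \mathcal{F}^L_{n,m}(\mathcal{U}) = \mathcal{F}^0_{n,m+1}(\mathcal{U}) \cup \mathcal{F}^L_{n,m+1}(\mathcal{U})$. -/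
open scoped Classical

/-- `𝓕⁰ₙ,ₘ(U)`: walks ending in `U` admitting indices `0 ≤ i₁ < ⋯ < iₘ ≤ n` with
`S_{i_j} ≤ 0` for odd `j` and `S_{i_j} ≥ L` for even `j`.  (Here `j : Fin m` is
0-indexed, so "odd `j`" in the paper corresponds to `(j : ℕ) % 2 = 0`.) -/
noncomputable def F0 (x t L : ℝ) (n m : ℕ) (U : Set ℝ) : Finset (Fin n → Bool) :=
  Finset.univ.filter (fun ω => S x t n ω n ∈ U ∧
    ∃ i : Fin m → ℕ, StrictMono i ∧ (∀ j, i j ≤ n) ∧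
      ∀ j : Fin m, if (j : ℕ) % 2 = 0 then S x t n ω (i j) ≤ 0 else L ≤ S x t n ω (i j))

/-- `𝓕ᴸₙ,ₘ(U)`: same with the roles of the two constraints reversed. -/
noncomputable def FL (x t L : ℝ) (n m : ℕ) (U : Set ℝ) : Finset (Fin n → Bool) :=
  Finset.univ.filter (fun ω => S x t n ω n ∈ U ∧
    ∃ i : Fin m → ℕ, StrictMono i ∧ (∀ j, i j ≤ n) ∧
      ∀ j : Fin m, if (j : ℕ) % 2 = 0 then L ≤ S x t n ω (i j) else S x t n ω (i j) ≤ 0)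

/-!
An alternating chain of length `m + 1` contains two of length `m`: dropping its last index keeps
the starting set, and dropping its first index exchanges the two sets. Conversely, of two chains of
length `m` with opposite starting sets, one starts strictly earlier, because the two sets are
disjoint; putting that earlier first index in front of the other chain gives length `m + 1`.
-/

section AlternatingChain

/-- The alternating sequence `a, b, a, b, …`, indexed from `0`: its term at `k` is the constraint
that the paper puts on `i_{k+1}`. -/
def alternate {α : Type*} (a b : α) (k : ℕ) : α :=
  if Even k then a else b

@[simp]
theorem alternate_zero {α : Type*} (a b : α) : alternate a b 0 = a :=
  if_pos Even.zero

@[simp]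
theorem alternate_succ {α : Type*} (a b : α) (k : ℕ) :
    alternate a b (k + 1) = alternate b a k := by
  simp only [alternate, Nat.even_add_one, ite_not]

/-- There is a strictly increasing sequence of `m` indices lying alternately in `A` and in `B`,
starting in `A`. It is the condition defining `F0` and `FL`, for arbitrary sets of indices. -/
def HasAlternatingChain {ι : Type*} [Preorder ι] (A B : Set ι) (m : ℕ) : Prop :=
  ∃ i : Fin m → ι, StrictMono i ∧ ∀ j : Fin m, i j ∈ alternate A B j

namespace HasAlternatingChain

variable {ι : Type*} [Preorder ι] {A B : Set ι} {m : ℕ}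

theorem init (h : HasAlternatingChain A B (m + 1)) : HasAlternatingChain A B m := by
  obtain ⟨i, hi, hmem⟩ := h
  exact ⟨Fin.init i, hi.comp Fin.strictMono_castSucc, fun j ↦ hmem j.castSucc⟩

theorem tail (h : HasAlternatingChain A B (m + 1)) : HasAlternatingChain B A m := by
  obtain ⟨i, hi, hmem⟩ := h
  refine ⟨Fin.tail i, hi.comp Fin.strictMono_succ, fun j ↦ ?_⟩
  rw [← alternate_succ]
  exact hmem j.succ

theorem cons {i : Fin (m + 1) → ι} (hi : StrictMono i)
    (hmem : ∀ j : Fin (m + 1), i j ∈ alternate B A j) {a : ι} (ha : a ∈ A) (hlt : a < i 0) :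
    HasAlternatingChain A B (m + 2) := by
  refine ⟨Matrix.vecCons a i, strictMono_vecCons.mpr ⟨hlt, hi⟩, Fin.cases ?_ fun j ↦ ?_⟩
  · simpa using ha
  · simpa using hmem j

end HasAlternatingChain

theorem stmt6_general {ι : Type*} [LinearOrder ι] {A B : Set ι} (hAB : Disjoint A B) {m : ℕ}
    (hm : 1 ≤ m) :
    HasAlternatingChain A B m ∧ HasAlternatingChain B A m ↔
      HasAlternatingChain A B (m + 1) ∨ HasAlternatingChain B A (m + 1) := by
  constructor
  · obtain ⟨m, rfl⟩ := Nat.exists_eq_add_of_le' hm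
    rintro ⟨⟨i, hi, hiA⟩, ⟨k, hk, hkB⟩⟩
    have hi₀ : i 0 ∈ A := by simpa using hiA 0
    have hk₀ : k 0 ∈ B := by simpa using hkB 0
    rcases (hAB.ne_of_mem hi₀ hk₀).lt_or_gt with hlt | hgt
    · exact .inl (.cons hk hkB hi₀ hlt)
    · exact .inr (.cons hi hiA hk₀ hgt)
  · rintro (h | h)
    · exact ⟨h.init, h.tail⟩
    · exact ⟨h.tail, h.init⟩

end AlternatingChain

section Walk

/-- The times `k ≤ n` at which the walk `S_k(ω)` is in `E`; for `E = (-∞, 0]` and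
`E = [L, ∞)` these are the sets among which the indices of `F0` and `FL` alternate. -/
def visitTimes (x t : ℝ) (n : ℕ) (ω : Fin n → Bool) (E : Set ℝ) : Set ℕ :=
  Set.Iic n ∩ S x t n ω ⁻¹' E

variable {x t L : ℝ} {n m : ℕ} {ω : Fin n → Bool} {U : Set ℝ}

theorem disjoint_visitTimes {E E' : Set ℝ} (h : Disjoint E E') :
    Disjoint (visitTimes x t n ω E) (visitTimes x t n ω E') :=
  (h.preimage _).mono Set.inter_subset_right Set.inter_subset_right

theorem hasAlternatingChain_visitTimes_iff {E E' : Set ℝ} :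
    HasAlternatingChain (visitTimes x t n ω E) (visitTimes x t n ω E') m ↔
      ∃ i : Fin m → ℕ, StrictMono i ∧ (∀ j, i j ≤ n) ∧
        ∀ j : Fin m, if (j : ℕ) % 2 = 0 then S x t n ω (i j) ∈ E else S x t n ω (i j) ∈ E' := by
  have mem_alternate_iff (j k : ℕ) :
      k ∈ alternate (visitTimes x t n ω E) (visitTimes x t n ω E') j ↔
        k ≤ n ∧ if j % 2 = 0 then S x t n ω k ∈ E else S x t n ω k ∈ E' := by
    simp only [alternate, Nat.even_iff]
    split_ifs <;> rfl
  simp only [HasAlternatingChain, mem_alternate_iff, forall_and]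

theorem mem_F0_iff :
    ω ∈ F0 x t L n m U ↔ S x t n ω n ∈ U ∧
      HasAlternatingChain (visitTimes x t n ω (Set.Iic 0)) (visitTimes x t n ω (Set.Ici L)) m := by
  simp only [F0, Finset.mem_filter_univ, hasAlternatingChain_visitTimes_iff, Set.mem_Iic,
    Set.mem_Ici]

theorem mem_FL_iff :
    ω ∈ FL x t L n m U ↔ S x t n ω n ∈ U ∧
      HasAlternatingChain (visitTimes x t n ω (Set.Ici L)) (visitTimes x t n ω (Set.Iic 0)) m := by
  simp only [FL, Finset.mem_filter_univ, hasAlternatingChain_visitTimes_iff, Set.mem_Iic,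
    Set.mem_Ici]

end Walk

theorem stmt6 (x t L : ℝ) (ht : 0 < t) (hL : 0 < L) (n : ℕ) (U : Set ℝ) :
    ∀ m : ℕ, 1 ≤ m → m ≤ n - 1 →
      F0 x t L n m U ∩ FL x t L n m U =
        F0 x t L n (m + 1) U ∪ FL x t L n (m + 1) U := by
  intro m hm _
  ext ω
  have hdisj : Disjoint (visitTimes x t n ω (Set.Iic 0)) (visitTimes x t n ω (Set.Ici L)) :=
    disjoint_visitTimes (Set.Iic_disjoint_Ici.mpr hL.not_ge)
  simp only [Finset.mem_inter, Finset.mem_union, mem_F0_iff, mem_FL_iff, ← and_and_left,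
    stmt6_general hdisj hm, and_or_left]
end
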